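/- arXiv:2301.04287 — 2 statements merged into one kernel-verified Lean document; each statement's English description precedes it below -/
import Mathlib

section
/- The (n+2)-dimensional Lebesgue measure of Δ equals (2n+2)/(n+2)!. -/
/-- The points `V_1, …, V_{n+3}` in `ℝ^{n+2}` (0-indexed: `Vpt n j` is `V_{j+1}`):
`V_i = e_i + e_{n+1} + e_{n+2}` for `1 ≤ i ≤ n`,
`V_{n+1} = −(e_1+⋯+e_n) + e_{n+1} + e_{n+2}`, `V_{n+2} = e_{n+1}`, `V_{n+3} = e_{n+2}`. -/
def Vpt (n : ℕ) (j : Fin (n + 3)) (i : Fin (n + 2)) : ℝ :=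
  if (j : ℕ) < n then
    (if (i : ℕ) = (j : ℕ) then 1 else 0) + (if (i : ℕ) = n then 1 else 0) +
      (if (i : ℕ) = n + 1 then 1 else 0)
  else if (j : ℕ) = n then (if (i : ℕ) < n then -1 else 1)
  else if (j : ℕ) = n + 1 then (if (i : ℕ) = n then 1 else 0)
  else (if (i : ℕ) = n + 1 then 1 else 0)

open MeasureTheory

/-- corner simplex of size `t` -/
def cornerS (N : ℕ) (t : ℝ) : Set (Fin N → ℝ) := {x | (∀ i, 0 ≤ x i) ∧ ∑ i, x i ≤ t}

lemma cornerS_closed (N : ℕ) (t : ℝ) : IsClosed (cornerS N t) := by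
  have h : cornerS N t = (⋂ i, {x : Fin N → ℝ | 0 ≤ x i}) ∩ {x | ∑ i, x i ≤ t} := by
    ext x; simp [cornerS]
  rw [h]
  refine IsClosed.inter (isClosed_iInter fun i => isClosed_le (by fun_prop) (by fun_prop))
    (isClosed_le (by fun_prop) (by fun_prop))

lemma cornerS_compact (N : ℕ) (t : ℝ) : IsCompact (cornerS N t) := by
  refine IsCompact.of_isClosed_subset (isCompact_Icc (a := (0 : Fin N → ℝ)) (b := fun _ => t))
    (cornerS_closed N t) ?_
  intro x hx
  refine ⟨fun i => hx.1 i, fun i => ?_⟩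
  exact (Finset.single_le_sum (f := x) (fun j _ => hx.1 j) (Finset.mem_univ i)).trans hx.2

lemma cornerS_volume (N : ℕ) : ∀ t : ℝ, 0 ≤ t →
    volume (cornerS N t) = ENNReal.ofReal (t ^ N / N.factorial) := by
  induction N with
  | zero =>
    intro t ht
    have : cornerS 0 t = Set.univ := by
      ext x; simp [cornerS, ht]
    rw [this, volume_pi, Measure.pi_of_empty]
    simp
  | succ N ih =>
    intro t ht
    have hmp := (volume_preserving_piFinSuccAbove (fun _ : Fin (N + 1) => ℝ) 0).symm
    rw [← hmp.measure_preimage_equiv, Measure.volume_eq_prod, Measure.prod_apply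
      ((MeasurableEquiv.measurable _) (cornerS_closed _ t).measurableSet)]
    have hsec : ∀ x : ℝ, volume (Prod.mk x ⁻¹'
        ((MeasurableEquiv.piFinSuccAbove (fun _ : Fin (N + 1) => ℝ) 0).symm ⁻¹' cornerS (N + 1) t))
        = (Set.Icc 0 t).indicator (fun x => ENNReal.ofReal ((t - x) ^ N / N.factorial)) x := by
      intro x
      have hmem : ∀ y : Fin N → ℝ, y ∈ (Prod.mk x ⁻¹'
        ((MeasurableEquiv.piFinSuccAbove (fun _ : Fin (N + 1) => ℝ) 0).symm ⁻¹' cornerS (N + 1) t))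
         ↔ 0 ≤ x ∧ y ∈ cornerS N (t - x) := by
        intro y
        simp only [Set.mem_preimage, cornerS, Set.mem_ofPred_eq, Fin.forall_fin_succ,
          Fin.sum_univ_succ, MeasurableEquiv.piFinSuccAbove_symm_apply, Fin.insertNthEquiv_apply,
          Fin.insertNth_zero', Fin.cons_zero, Fin.cons_succ]
        constructor
        · rintro ⟨⟨h1, h2⟩, h3⟩
          exact ⟨h1, h2, by linarith⟩
        · rintro ⟨h1, h2, h3⟩
          exact ⟨⟨h1, h2⟩, by linarith⟩
      by_cases hx : x ∈ Set.Icc 0 t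
      · rw [Set.indicator_of_mem hx, ← ih (t - x) (by linarith [hx.2])]
        congr 1
        ext y
        rw [hmem]
        simp [hx.1]
      · rw [Set.indicator_of_notMem hx]
        convert measure_empty (μ := (volume : Measure (Fin N → ℝ)))
        ext y
        rw [hmem]
        simp only [Set.mem_empty_iff_false, iff_false]
        rintro ⟨h1, h2, h3⟩
        apply hx
        refine ⟨h1, ?_⟩
        have := Finset.sum_nonneg (fun i (_ : i ∈ Finset.univ) => h2 i)
        linarith
    simp_rw [hsec]
    rw [lintegral_indicator measurableSet_Icc, ← ofReal_integral_eq_lintegral_ofReal]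
    · congr 1
      rw [integral_Icc_eq_integral_Ioc, ← intervalIntegral.integral_of_le ht]
      rw [intervalIntegral.integral_comp_sub_left (fun x => x ^ N / (N.factorial : ℝ)) t]
      rw [intervalIntegral.integral_div, integral_pow, Nat.factorial_succ]
      have : (N.factorial : ℝ) ≠ 0 := by positivity
      push_cast
      field_simp
      simp
    · exact (Continuous.integrableOn_Icc (by fun_prop))
    · filter_upwards [ae_restrict_mem measurableSet_Icc] with x hx
      have : 0 ≤ t - x := by linarith [hx.2]
      positivity

/-- vertices of the two simplices of the triangulation -/
def Wm (n : ℕ) (k : Fin (n + 3)) : Matrix (Fin (n + 2)) (Fin (n + 2)) ℝ :=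
  Matrix.of (Fin.snoc (α := fun _ => Fin (n + 2) → ℝ)
    (fun j : Fin (n + 1) => Vpt n j.castSucc.castSucc) (Vpt n k))

lemma Wm_castSucc (n : ℕ) (k : Fin (n + 3)) (j : Fin (n + 1)) :
    Wm n k j.castSucc = Vpt n j.castSucc.castSucc := by
  ext i; simp [Wm]

lemma Wm_last (n : ℕ) (k : Fin (n + 3)) : Wm n k (Fin.last (n + 1)) = Vpt n k := by
  ext i; simp [Wm]

lemma Wm_det (n : ℕ) (k : Fin (n + 3)) (hk : n < k) : |(Wm n k).det| = n + 1 := by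
  rw [← Matrix.det_submatrix_equiv_self (finSumFinEquiv (m := n) (n := 2)) (Wm n k)]
  have h : (Wm n k).submatrix (finSumFinEquiv (m := n) (n := 2)) (finSumFinEquiv (m := n) (n := 2))
      = Matrix.fromBlocks 1 (Matrix.of fun _ _ => 1) (Matrix.of fun i _ => if i = 0 then -1 else 0)
        (if (k : ℕ) = n + 1 then !![1, 1; 1, 0] else !![1, 1; 0, 1]) := by
    have hl : Fin.natAdd n (1 : Fin 2) = Fin.last (n + 1) := by ext; simp
    have h0 : Fin.natAdd n (0 : Fin 2) = (Fin.last n).castSucc := by ext; simp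
    have hc : ∀ j : Fin n, Fin.castAdd 2 j = (j.castSucc).castSucc := by intro j; ext; simp
    ext i j
    rcases i with i | i <;> rcases j with j | j
    · have := j.2
      have := i.2
      simp only [Matrix.submatrix_apply, finSumFinEquiv_apply_left, Matrix.fromBlocks_apply₁₁, hc, Wm, Matrix.of_apply, Fin.snoc_castSucc]
      simp [Vpt, Matrix.one_apply, Fin.ext_iff, eq_comm, this]
      grind
    · have := i.2
      simp only [Matrix.submatrix_apply, finSumFinEquiv_apply_left, finSumFinEquiv_apply_right, Matrix.fromBlocks_apply₁₂, hc, Wm, Matrix.of_apply, Fin.snoc_castSucc]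
      fin_cases j <;> simp [Vpt] <;> grind
    · have := j.2
      simp only [Matrix.submatrix_apply, finSumFinEquiv_apply_left, finSumFinEquiv_apply_right, Matrix.fromBlocks_apply₂₁, Wm, Matrix.of_apply]
      fin_cases i
      · simp only [Fin.zero_eta, h0, Fin.snoc_castSucc]
        simp [Vpt]
      · simp only [Fin.mk_one, hl, Fin.snoc_last]
        simp [Vpt]
        grind
    · simp only [Matrix.submatrix_apply, finSumFinEquiv_apply_right, Matrix.fromBlocks_apply₂₂, Wm, Matrix.of_apply]
      fin_cases i
      · simp only [Fin.zero_eta, h0, Fin.snoc_castSucc]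
        fin_cases j <;> by_cases hk1 : (k : ℕ) = n + 1 <;> simp [Vpt, hk1]
      · simp only [Fin.mk_one, hl, Fin.snoc_last]
        have h1 : ¬ ((k : ℕ) < n) := by omega
        have h2 : ¬ ((k : ℕ) = n) := by omega
        fin_cases j <;> by_cases hk1 : (k : ℕ) = n + 1 <;> simp [Vpt, hk1, h1, h2]
  rw [h, Matrix.det_fromBlocks_one₁₁, Matrix.det_fin_two]
  have hp : (0 : ℝ) ≤ n + 1 := by positivity
  by_cases hk1 : (k : ℕ) = n + 1
  · simp [hk1, Matrix.mul_apply]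
    rw [← abs_neg, ← abs_of_nonneg hp]
    congr 1
    ring_nf
    try simp
  · simp [hk1, Matrix.mul_apply]
    rw [← abs_of_nonneg hp]
    congr 1
    ring_nf
    try simp

/-- the simplices -/
def Tm (n : ℕ) (k : Fin (n + 3)) : Set (Fin (n + 2) → ℝ) :=
  Matrix.toLin' (Wm n k).transpose '' cornerS (n + 2) 1

lemma Tm_compact (n : ℕ) (k : Fin (n + 3)) : IsCompact (Tm n k) :=
  (cornerS_compact _ _).image (LinearMap.continuous_of_finiteDimensional _)

lemma Tm_volume (n : ℕ) (k : Fin (n + 3)) (hk : n < k) :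
    volume (Tm n k) = ENNReal.ofReal ((n + 1 : ℝ) / (n + 2).factorial) := by
  rw [Tm, Measure.addHaar_image_linearMap, cornerS_volume _ _ zero_le_one, LinearMap.det_toLin',
    Matrix.det_transpose, Wm_det n k hk, ← ENNReal.ofReal_mul (by positivity)]
  congr 1
  simp
  ring

lemma lin_apply (n : ℕ) (k : Fin (n + 3)) (c : Fin (n + 2) → ℝ) :
    Matrix.toLin' (Wm n k).transpose c
      = ∑ j : Fin (n + 1), c j.castSucc • Vpt n j.castSucc.castSucc + c (Fin.last _) • Vpt n k := by
  have : Matrix.toLin' (Wm n k).transpose c = ∑ j, c j • Wm n k j := by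
    ext i
    simp [Matrix.toLin'_apply, Matrix.mulVec, dotProduct, Finset.sum_apply, mul_comm]
  rw [this, Fin.sum_univ_castSucc, Wm_last]
  simp only [Wm_castSucc]

lemma Tm_sub (n : ℕ) (k : Fin (n + 3)) :
    Tm n k ⊆ convexHull ℝ (insert (0 : Fin (n + 2) → ℝ) (Set.range (Vpt n))) := by
  rintro _ ⟨c, hc, rfl⟩
  rw [lin_apply]
  have hV : ∀ j, Vpt n j ∈ convexHull ℝ (insert (0 : Fin (n + 2) → ℝ) (Set.range (Vpt n))) :=
    fun j => subset_convexHull _ _ (Set.mem_insert_of_mem _ ⟨j, rfl⟩)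
  have h0 : (0 : Fin (n + 2) → ℝ) ∈ convexHull ℝ (insert (0 : Fin (n + 2) → ℝ) (Set.range (Vpt n))) :=
    subset_convexHull _ _ (Set.mem_insert _ _)
  obtain ⟨W, hW1, hW2⟩ : ∃ W : Fin (n + 2) → Fin (n + 2) → ℝ,
      (∀ j : Fin (n + 1), W j.castSucc = Vpt n j.castSucc.castSucc) ∧
        W (Fin.last (n + 1)) = Vpt n k := ⟨fun j => Wm n k j, Wm_castSucc n k, Wm_last n k⟩
  have := (convex_convexHull ℝ (insert (0 : Fin (n + 2) → ℝ) (Set.range (Vpt n)))).sum_mem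
    (t := Finset.univ) (w := Fin.cons (α := fun _ => ℝ) (1 - ∑ i, c i) c)
    (z := Fin.cons (α := fun _ => Fin (n + 2) → ℝ) 0 W) ?_ ?_ ?_
  · rw [Fin.sum_univ_succ] at this
    simp only [Fin.cons_zero, Fin.cons_succ, smul_zero, zero_add] at this
    rw [Fin.sum_univ_castSucc, hW2] at this
    simpa only [hW1] using this
  · intro i _
    refine Fin.cases ?_ (fun i => ?_) i
    · simpa using hc.2
    · simpa using hc.1 i
  · rw [Fin.sum_univ_succ]
    simp
  · intro i _
    refine Fin.cases ?_ (fun i => ?_) i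
    · simpa using h0
    · refine Fin.lastCases ?_ (fun i => ?_) i
      · rw [Fin.cons_succ, hW2]
        exact hV _
      · rw [Fin.cons_succ, hW1]
        exact hV _

lemma rel (n : ℕ) : ∑ j : Fin (n + 1), Vpt n j.castSucc.castSucc
    = ((n : ℝ) + 1) • (Vpt n (Fin.last (n + 1)).castSucc + Vpt n (Fin.last (n + 2))) := by
  ext i
  rw [Finset.sum_apply, Fin.sum_univ_castSucc]
  have hi := i.2
  rcases lt_trichotomy (i : ℕ) n with h | h | h
  · have h1 : (i : ℕ) ≠ n := by omega
    have h2 : (i : ℕ) ≠ n + 1 := by omega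
    have : ∀ x : Fin n, ((i : ℕ) = (x : ℕ)) ↔ (⟨i, h⟩ : Fin n) = x := by
      intro x; simp [Fin.ext_iff]
    simp [Vpt, h, h1, h2, this]
  · have : ∀ x : Fin n, n ≠ (x : ℕ) := fun x => x.2.ne'
    simp [Vpt, h, this]
  · have h' : (i : ℕ) = n + 1 := by omega
    have : ∀ x : Fin n, n + 1 ≠ (x : ℕ) := fun x => by omega
    simp [Vpt, h', this]

lemma hull_sub (n : ℕ) :
    convexHull ℝ (insert (0 : Fin (n + 2) → ℝ) (Set.range (Vpt n))) ⊆
      Tm n (Fin.last (n + 1)).castSucc ∪ Tm n (Fin.last (n + 2)) := by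
  have h1 : convexHull ℝ (insert (0 : Fin (n + 2) → ℝ) (Set.range (Vpt n))) ⊆
      {x | ∃ c : Fin (n + 3) → ℝ, (∀ i, 0 ≤ c i) ∧ ∑ i, c i ≤ 1 ∧ x = ∑ i, c i • Vpt n i} := by
    apply convexHull_min
    · rintro x (rfl | ⟨j, rfl⟩)
      · exact ⟨0, by simp, by simp, by simp⟩
      · refine ⟨Pi.single j 1, ?_, by simp, ?_⟩
        · intro i
          by_cases h : i = j
          · subst h; simp
          · simp [h]
        · simp [Pi.single_apply]
    · rintro x ⟨c, hc, hs, rfl⟩ y ⟨d, hd, ht, rfl⟩ a b ha hb hab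
      refine ⟨a • c + b • d, ?_, ?_, ?_⟩
      · intro i
        have := hc i
        have := hd i
        simp only [Pi.add_apply, Pi.smul_apply, smul_eq_mul]
        positivity
      · simp only [Pi.add_apply, Pi.smul_apply, smul_eq_mul, Finset.sum_add_distrib, ← Finset.mul_sum]
        nlinarith
      · simp only [Pi.add_apply, Pi.smul_apply, smul_eq_mul, add_smul, mul_smul,
          Finset.sum_add_distrib, Finset.smul_sum]
  refine h1.trans ?_
  rintro x ⟨c, hc, hs, rfl⟩
  rw [Fin.sum_univ_castSucc, Fin.sum_univ_castSucc] at hs ⊢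
  have hr := rel n
  have hpos : (0 : ℝ) < n + 1 := by positivity
  have hp := hc (Fin.last (n + 1)).castSucc
  have hq := hc (Fin.last (n + 2))
  have ha : ∀ j : Fin (n + 1), 0 ≤ c j.castSucc.castSucc := fun j => hc _
  generalize c (Fin.last (n + 1)).castSucc = p at *
  generalize c (Fin.last (n + 2)) = q at *
  have key : ∀ m : ℝ, ∑ j : Fin (n + 1), (m / (n + 1)) • Vpt n j.castSucc.castSucc
      = m • (Vpt n (Fin.last (n + 1)).castSucc + Vpt n (Fin.last (n + 2))) := by
    intro m
    rw [← Finset.smul_sum, hr, smul_smul]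
    congr 1
    field_simp
  have key2 : ∀ m : ℝ, ∑ _j : Fin (n + 1), (m / (n + 1)) = m := by
    intro m
    simp
    field_simp
  rcases le_total q p with h | h
  · left
    refine ⟨Fin.snoc (α := fun _ => ℝ) (fun j => c j.castSucc.castSucc + q / (n + 1)) (p - q), ⟨?_, ?_⟩, ?_⟩
    · intro i
      refine Fin.lastCases ?_ (fun i => ?_) i
      · simpa using h
      · have := ha i
        simp only [Fin.snoc_castSucc]
        positivity
    · rw [Fin.sum_univ_castSucc]
      simp only [Fin.snoc_castSucc, Fin.snoc_last, Finset.sum_add_distrib, key2]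
      linarith
    · rw [lin_apply]
      simp only [Fin.snoc_castSucc, Fin.snoc_last, add_smul, Finset.sum_add_distrib, key]
      module
  · right
    refine ⟨Fin.snoc (α := fun _ => ℝ) (fun j => c j.castSucc.castSucc + p / (n + 1)) (q - p), ⟨?_, ?_⟩, ?_⟩
    · intro i
      refine Fin.lastCases ?_ (fun i => ?_) i
      · simpa using h
      · have := ha i
        simp only [Fin.snoc_castSucc]
        positivity
    · rw [Fin.sum_univ_castSucc]
      simp only [Fin.snoc_castSucc, Fin.snoc_last, Finset.sum_add_distrib, key2]
      linarith
    · rw [lin_apply]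
      simp only [Fin.snoc_castSucc, Fin.snoc_last, add_smul, Finset.sum_add_distrib, key]
      module

/-- difference of the last two coordinates -/
def dif (n : ℕ) : (Fin (n + 2) → ℝ) →ₗ[ℝ] ℝ :=
  LinearMap.proj (R := ℝ) (φ := fun _ : Fin (n + 2) => ℝ) (Fin.last n).castSucc -
    LinearMap.proj (R := ℝ) (φ := fun _ : Fin (n + 2) => ℝ) (Fin.last (n + 1))

lemma dif_V (n : ℕ) (j : Fin (n + 1)) : dif n (Vpt n j.castSucc.castSucc) = 0 := by
  have := j.2
  simp [dif, Vpt]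
  grind

lemma inter_null (n : ℕ) :
    volume (Tm n (Fin.last (n + 1)).castSucc ∩ Tm n (Fin.last (n + 2))) = 0 := by
  refine measure_mono_null (t := (LinearMap.ker (dif n) : Set (Fin (n + 2) → ℝ))) ?_ ?_
  · rintro x ⟨⟨c, hc, rfl⟩, ⟨d, hd, h⟩⟩
    have e1 : dif n (Matrix.toLin' (Wm n (Fin.last (n + 1)).castSucc).transpose c)
        = c (Fin.last _) := by
      rw [lin_apply, map_add, map_sum]
      simp only [map_smul, dif_V]
      simp [dif, Vpt]
    have e2 : dif n (Matrix.toLin' (Wm n (Fin.last (n + 2))).transpose d)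
        = - d (Fin.last _) := by
      rw [lin_apply, map_add, map_sum]
      simp only [map_smul, dif_V]
      simp [dif, Vpt]
    have := hc.1 (Fin.last _)
    have := hd.1 (Fin.last _)
    simp only [SetLike.mem_coe, LinearMap.mem_ker]
    rw [h] at e2
    linarith
  · apply Measure.addHaar_submodule
    intro h
    have : dif n (Pi.single (Fin.last (n + 1)) 1) = 0 := by
      rw [← LinearMap.mem_ker, h]; trivial
    simp [dif, Fin.ext_iff] at this

theorem stmt15 (n : ℕ) (hn : 1 ≤ n) :
    MeasureTheory.volume
        (convexHull ℝ (insert (0 : Fin (n + 2) → ℝ) (Set.range (Vpt n))))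
      = ENNReal.ofReal ((2 * n + 2 : ℝ) / (n + 2).factorial) := by
  have h : convexHull ℝ (insert (0 : Fin (n + 2) → ℝ) (Set.range (Vpt n))) =
      Tm n (Fin.last (n + 1)).castSucc ∪ Tm n (Fin.last (n + 2)) :=
    (hull_sub n).antisymm (Set.union_subset (Tm_sub n _) (Tm_sub n _))
  rw [h, measure_union₀ (Tm_compact n _).measurableSet.nullMeasurableSet (inter_null n),
    Tm_volume n _ (by simp), Tm_volume n _ (by simp), ← ENNReal.ofReal_add (by positivity) (by positivity)]
  congr 1
  ring
end

section
/- For every integer k ≥ 0, the number of lattice points of ℤ^{n+2} lying in the dilate k·Δ equals C(k+n+2, n+2) + 2·Σ_{j=1}^{n} C(k−j+n+2, n+2) + C(k+1, n+2), where C(m, r) denotes the binomial coefficient and terms with k < j are understood to vanish. (Equivalently, the Hodge numbers of Δ are H_Δ(0) = 1, H_Δ(1) = ⋯ = H_Δ(n) = 2, H_Δ(n+1) = 1.) -/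
open Finset
open scoped Pointwise

/-- Tuples of naturals with sum at most `r`. -/
def Pset (n r : ℕ) : Finset (Fin (n + 1) → ℕ) :=
  {l ∈ Fintype.piFinset (fun _ => Finset.range (r + 1)) | ∑ i, l i ≤ r}

/-- Those with some entry zero. -/
def Qset (n r : ℕ) : Finset (Fin (n + 1) → ℕ) := {l ∈ Pset n r | ∃ i, l i = 0}

lemma mem_Pset {n r : ℕ} {l : Fin (n + 1) → ℕ} : l ∈ Pset n r ↔ ∑ i, l i ≤ r := by
  simp only [Pset, Finset.mem_filter, Fintype.mem_piFinset, Finset.mem_range, and_iff_right_iff_imp]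
  intro h i
  have := Finset.single_le_sum (f := l) (fun i _ => Nat.zero_le _) (Finset.mem_univ i)
  omega

lemma mem_Qset {n r : ℕ} {l : Fin (n + 1) → ℕ} :
    l ∈ Qset n r ↔ ∑ i, l i ≤ r ∧ ∃ i, l i = 0 := by
  simp [Qset, mem_Pset]

lemma card_Pset (n r : ℕ) : (Pset n r).card = (r + n + 1).choose (n + 1) := by
  have h := Finset.card_finsuppAntidiag_nat_eq_choose (s := (Finset.univ : Finset (Fin (n + 2)))) r
  have e : (Pset n r).card = (Finset.finsuppAntidiag (Finset.univ : Finset (Fin (n + 2))) r).card := by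
    refine Finset.card_bij'
      (fun l _ => Finsupp.equivFunOnFinite.symm (Fin.snoc l (r - ∑ i, l i) : Fin (n + 2) → ℕ))
      (fun f _ => fun i => f i.castSucc) ?_ ?_ ?_ ?_
    · intro l hl
      rw [mem_Pset] at hl
      simp [Finset.mem_finsuppAntidiag, Fin.sum_univ_castSucc (n := n + 1)]
      omega
    · intro f hf
      rw [mem_Pset]
      simp [Finset.mem_finsuppAntidiag, Fin.sum_univ_castSucc (n := n + 1)] at hf
      omega
    · intro l hl
      ext i
      simp
    · intro f hf
      simp [Finset.mem_finsuppAntidiag, Fin.sum_univ_castSucc (n := n + 1)] at hf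
      ext i
      refine Fin.lastCases ?_ (fun j => ?_) i
      · simp; omega
      · simp
  rw [e, h]
  simp only [Finset.card_univ, Fintype.card_fin]
  rw [Nat.choose_symm_of_eq_add (n := r + n + 1) (a := n + 1) (b := r) (by omega)]
  congr 1
  omega

lemma card_Qset (n r : ℕ) :
    (Qset n r).card + r.choose (n + 1) = (r + n + 1).choose (n + 1) := by
  rw [← card_Pset]
  have h1 : (Pset n r).card = (Qset n r).card + ({l ∈ Pset n r | ¬ ∃ i, l i = 0}).card := by
    rw [Qset, Finset.card_filter_add_card_filter_not]
  rw [h1]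
  congr 1
  by_cases hr : n + 1 ≤ r
  · obtain ⟨s, rfl⟩ := Nat.exists_eq_add_of_le hr
    have : (n + 1 + s).choose (n + 1) = (Pset n s).card := by
      rw [card_Pset]; congr 1; omega
    rw [this]
    refine Finset.card_bij' (fun l _ i => l i + 1) (fun l _ i => l i - 1) ?_ ?_ ?_ ?_
    · intro l hl
      rw [mem_Pset] at hl
      simp [mem_Pset, Finset.sum_add_distrib]
      omega
    · intro l hl
      simp [mem_Pset] at hl
      have : ∑ i, l i = ∑ i, ((l i - 1) + 1) :=
        Finset.sum_congr rfl fun i _ => by have := hl.2 i; omega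
      rw [Finset.sum_add_distrib] at this
      simp at this
      rw [mem_Pset]
      omega
    · intro l hl
      simp
    · intro l hl
      simp [mem_Pset] at hl
      ext i
      have := hl.2 i
      simp only; omega
  · rw [Nat.choose_eq_zero_of_lt (by omega)]
    symm
    rw [Finset.card_eq_zero, Finset.filter_eq_empty_iff]
    intro l hl hh
    rw [mem_Pset] at hl
    push Not at hh
    have : ∑ i : Fin (n + 1), 1 ≤ ∑ i, l i :=
      Finset.sum_le_sum fun i _ => Nat.one_le_iff_ne_zero.2 (hh i)
    simp at this
    omega

lemma sumT (n k : ℕ) :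
    ∑ a ∈ Finset.range (k + 1), (Qset n a).card + (k + 1).choose (n + 2)
      = (k + n + 2).choose (n + 2) := by
  induction k with
  | zero =>
    have := card_Qset n 0
    have h2 : (1 : ℕ).choose (n + 2) = 0 := Nat.choose_eq_zero_of_lt (by omega)
    simp at this ⊢
    simpa [h2] using this
  | succ k ih =>
    rw [Finset.sum_range_succ]
    have h := card_Qset n (k + 1)
    have h1 : (k + 1 + 1).choose (n + 2) = (k + 1).choose (n + 1) + (k + 1).choose (n + 2) :=
      Nat.choose_succ_succ _ _
    have h2 : (k + 1 + n + 2).choose (n + 2)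
        = (k + 1 + n + 1).choose (n + 1) + (k + n + 2).choose (n + 2) := by
      rw [show k + n + 2 = k + 1 + n + 1 by omega]
      exact Nat.choose_succ_succ _ _
    omega

lemma sumS (n k : ℕ) :
    ∑ a ∈ Finset.range (k + 1), ∑ b ∈ Finset.range (k + 1), (Qset n (min a b)).card
        + (k + 2).choose (n + 3) + (k + 1).choose (n + 3)
      = (k + n + 3).choose (n + 3) + (k + n + 2).choose (n + 3) := by
  induction k with
  | zero =>
    have := sumT n 0
    simp at this ⊢
    rw [Nat.choose_eq_zero_of_lt (show 2 < n + 3 by omega)]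
    have h2 : (1 : ℕ).choose (n + 2) = 0 := Nat.choose_eq_zero_of_lt (by omega)
    have h3 : (1 : ℕ).choose (n + 3) = 0 := Nat.choose_eq_zero_of_lt (by omega)
    simpa [h2, h3] using this
  | succ k ih =>
    have e1 : ∑ a ∈ Finset.range (k + 1 + 1), ∑ b ∈ Finset.range (k + 1 + 1),
          (Qset n (min a b)).card
        = ∑ a ∈ Finset.range (k + 1), ∑ b ∈ Finset.range (k + 1), (Qset n (min a b)).card
          + ∑ a ∈ Finset.range (k + 1), (Qset n a).card
          + ∑ a ∈ Finset.range (k + 1 + 1), (Qset n a).card := by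
      rw [Finset.sum_range_succ]
      congr 1
      · rw [← Finset.sum_add_distrib]
        refine Finset.sum_congr rfl fun a ha => ?_
        rw [Finset.sum_range_succ, min_eq_left]
        have := Finset.mem_range.1 ha
        omega
      · refine Finset.sum_congr rfl fun a ha => ?_
        rw [min_eq_right]
        have := Finset.mem_range.1 ha
        omega
    rw [e1]
    have t1 := sumT n k
    have t2 := sumT n (k + 1)
    have h1 : (k + 1 + 2).choose (n + 3) = (k + 2).choose (n + 2) + (k + 2).choose (n + 3) :=
      Nat.choose_succ_succ _ _
    have h2 : (k + 1 + 1).choose (n + 3) = (k + 1).choose (n + 2) + (k + 1).choose (n + 3) :=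
      Nat.choose_succ_succ _ _
    have h3 : (k + 1 + n + 3).choose (n + 3)
        = (k + 1 + n + 2).choose (n + 2) + (k + n + 3).choose (n + 3) := by
      rw [show k + n + 3 = k + 1 + n + 2 by omega]
      exact Nat.choose_succ_succ _ _
    have h4 : (k + 1 + n + 2).choose (n + 3)
        = (k + n + 2).choose (n + 2) + (k + n + 2).choose (n + 3) := by
      rw [show k + 1 + n + 2 = k + n + 2 + 1 by omega]
      exact Nat.choose_succ_succ _ _
    have h5 : (k + 1 + 1).choose (n + 2) = (k + 2).choose (n + 2) := rfl
    omega

lemma hockey (n k : ℕ) (m : ℕ) (hm : m ≤ n) :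
    (∑ j ∈ Finset.Icc 1 m, if j ≤ k then (k - j + n + 2).choose (n + 2) else 0)
      + (k + n + 2 - m).choose (n + 3) = (k + n + 2).choose (n + 3) := by
  induction m with
  | zero => simp
  | succ m ih =>
    rw [Finset.sum_Icc_succ_top (by omega)]
    have := ih (by omega)
    have h1 : (k + n + 2 - m).choose (n + 3)
        = (k + n + 2 - (m + 1)).choose (n + 2) + (k + n + 2 - (m + 1)).choose (n + 3) := by
      rw [show k + n + 2 - m = k + n + 2 - (m + 1) + 1 by omega]
      exact Nat.choose_succ_succ _ _
    have h2 : (if m + 1 ≤ k then (k - (m + 1) + n + 2).choose (n + 2) else 0)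
        = (k + n + 2 - (m + 1)).choose (n + 2) := by
      split_ifs with h
      · congr 1; omega
      · rw [Nat.choose_eq_zero_of_lt (by omega)]
    omega

lemma sumS_final (n k : ℕ) :
    ∑ a ∈ Finset.range (k + 1), ∑ b ∈ Finset.range (k + 1), (Qset n (min a b)).card
      = (k + n + 2).choose (n + 2)
        + 2 * (∑ j ∈ Finset.Icc 1 n, if j ≤ k then (k - j + n + 2).choose (n + 2) else 0)
        + (k + 1).choose (n + 2) := by
  have h := hockey n k n le_rfl
  have s := sumS n k
  rw [show k + n + 2 - n = k + 2 by omega] at h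
  have h1 : (k + 2).choose (n + 3) = (k + 1).choose (n + 2) + (k + 1).choose (n + 3) :=
    Nat.choose_succ_succ _ _
  have h2 : (k + n + 3).choose (n + 3)
      = (k + n + 2).choose (n + 2) + (k + n + 2).choose (n + 3) :=
    Nat.choose_succ_succ _ _
  omega

lemma mem_dilate {m : ℕ} {ι : Type*} [Fintype ι] (V : ι → (Fin m → ℝ)) (k : ℕ) (x : Fin m → ℝ) :
    x ∈ (k : ℝ) • convexHull ℝ (insert (0 : Fin m → ℝ) (Set.range V)) ↔
      ∃ w : ι → ℝ, (∀ j, 0 ≤ w j) ∧ ∑ j, w j ≤ k ∧ x = ∑ j, w j • V j := by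
  classical
  constructor
  · rintro ⟨z, hz, rfl⟩
    have hsub : convexHull ℝ (insert (0 : Fin m → ℝ) (Set.range V)) ⊆
        {z | ∃ w : ι → ℝ, (∀ j, 0 ≤ w j) ∧ ∑ j, w j ≤ 1 ∧ z = ∑ j, w j • V j} := by
      apply convexHull_min
      · intro z hz
        rcases hz with rfl | ⟨j, rfl⟩
        · exact ⟨0, by simp, by simp, by simp⟩
        · refine ⟨Pi.single j 1, ?_, ?_, ?_⟩
          · intro i
            by_cases h : i = j
            · subst h; simp
            · simp [h]
          · simp
          · simp [Pi.single_apply]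
      · rintro _ ⟨w, hw, hw1, rfl⟩ _ ⟨v, hv, hv1, rfl⟩ a b ha hb hab
        refine ⟨fun j => a * w j + b * v j, ?_, ?_, ?_⟩
        · intro j
          have := hw j
          have := hv j
          positivity
        · rw [Finset.sum_add_distrib, ← Finset.mul_sum, ← Finset.mul_sum]
          nlinarith
        · simp [add_smul, Finset.sum_add_distrib, Finset.smul_sum, mul_smul]
    obtain ⟨w, hw, hw1, rfl⟩ := hsub hz
    refine ⟨fun j => k * w j, ?_, ?_, ?_⟩
    · intro j
      have := hw j
      positivity
    · rw [← Finset.mul_sum]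
      have : (0 : ℝ) ≤ k := by positivity
      nlinarith
    · simp [Finset.smul_sum, mul_smul]
  · rintro ⟨w, hw, hwk, rfl⟩
    have hc : Convex ℝ (convexHull ℝ (insert (0 : Fin m → ℝ) (Set.range V))) :=
      convex_convexHull _ _
    have h0 : (0 : Fin m → ℝ) ∈ convexHull ℝ (insert (0 : Fin m → ℝ) (Set.range V)) :=
      subset_convexHull _ _ (Set.mem_insert _ _)
    have hV : ∀ j, V j ∈ convexHull ℝ (insert (0 : Fin m → ℝ) (Set.range V)) := fun j =>
      subset_convexHull _ _ (Set.mem_insert_of_mem _ ⟨j, rfl⟩)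
    set W := ∑ j, w j with hW
    have hW0 : 0 ≤ W := Finset.sum_nonneg fun j _ => hw j
    rcases hW0.eq_or_lt with h | h
    · have hz : ∀ j, w j = 0 := fun j =>
        (Finset.sum_eq_zero_iff_of_nonneg (fun j _ => hw j)).1 (hW.symm.trans h.symm) j
          (Finset.mem_univ j)
      refine ⟨0, h0, ?_⟩
      simp [hz]
    · have hk : (0 : ℝ) < k := h.trans_le hwk
      have hy : ∑ j, (w j / W) • V j ∈ convexHull ℝ (insert (0 : Fin m → ℝ) (Set.range V)) := by
        refine hc.sum_mem (fun j _ => div_nonneg (hw j) hW0) ?_ (fun j _ => hV j)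
        rw [← Finset.sum_div, ← hW, div_self h.ne']
      refine ⟨(W / k) • ∑ j, (w j / W) • V j,
        hc.smul_mem_of_zero_mem h0 hy ⟨by positivity, ?_⟩, ?_⟩
      · rwa [div_le_one hk]
      · simp only [Finset.smul_sum, smul_smul]
        refine Finset.sum_congr rfl fun j _ => ?_
        congr 1
        field_simp

/-- The lattice point with given data. -/
def phi (n : ℕ) (p : Σ _ : ℕ × ℕ, (Fin (n + 1) → ℕ)) (i : Fin (n + 2)) : ℤ :=
  if h : (i : ℕ) < n then (p.2 ⟨i, by omega⟩ : ℤ) - p.2 (Fin.last n)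
  else if (i : ℕ) = n then p.1.1 else p.1.2

/-- Coordinates of a combination. -/
lemma coords (n : ℕ) (w : Fin (n + 3) → ℝ) (i : Fin (n + 2)) :
    (∑ j, w j • Vpt n j) i =
      if h : (i : ℕ) < n then w ⟨i, by omega⟩ - w ⟨n, by omega⟩
      else if (i : ℕ) = n then ∑ j : Fin (n + 1), w ⟨j, by omega⟩ + w ⟨n + 1, by omega⟩
      else ∑ j : Fin (n + 1), w ⟨j, by omega⟩ + w ⟨n + 2, by omega⟩ := by
  rw [Finset.sum_apply]
  simp only [Pi.smul_apply, smul_eq_mul]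
  rw [Fin.sum_univ_castSucc, Fin.sum_univ_castSucc, Fin.sum_univ_castSucc]
  have hj : ∀ j : Fin n, (j : ℕ) < n := fun j => j.2
  obtain ⟨i, hi⟩ := i
  simp only [Vpt, Fin.val_castSucc, Fin.val_last, hj, if_true]
  have n1 : ¬ (n + 1 < n) := by omega
  have n2 : ¬ (n + 2 < n) := by omega
  have n3 : n + 2 ≠ n := by omega
  rcases (show i < n ∨ i = n ∨ i = n + 1 by omega) with h1 | h2 | e
  · have : ∀ j : Fin n, (i = (j : ℕ)) ↔ (⟨i, h1⟩ : Fin n) = j := fun j => by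
      rw [Fin.ext_iff]
    have e1 : i ≠ n := by omega
    have e2 : i ≠ n + 1 := by omega
    simp [this, e1, e2, h1, n1, n2]
    rfl
  · subst h2
    have : ∀ j : Fin i, i ≠ (j : ℕ) := fun j => by omega
    simp [this, Fin.sum_univ_castSucc, n1, n2]
    rfl
  · subst e
    have : ∀ j : Fin n, n + 1 ≠ (j : ℕ) := fun j => by omega
    simp [this, Fin.sum_univ_castSucc, n1, n2]
    rfl

lemma phi_mem (n k a b : ℕ) (ha : a ≤ k) (hb : b ≤ k) (l : Fin (n + 1) → ℕ)
    (hla : ∑ i, l i ≤ a) (hlb : ∑ i, l i ≤ b) :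
    (fun i => (phi n ⟨(a, b), l⟩ i : ℝ)) ∈
      (k : ℝ) • convexHull ℝ (insert (0 : Fin (n + 2) → ℝ) (Set.range (Vpt n))) := by
  rw [mem_dilate]
  have hla' : ∑ i, (l i : ℝ) ≤ a := by exact_mod_cast hla
  have hlb' : ∑ i, (l i : ℝ) ≤ b := by exact_mod_cast hlb
  have ha' : (a : ℝ) ≤ k := by exact_mod_cast ha
  have hb' : (b : ℝ) ≤ k := by exact_mod_cast hb
  obtain ⟨s, hsa, hsb, hls, hsk⟩ :
      ∃ s : ℝ, s ≤ a ∧ s ≤ b ∧ ∑ i, (l i : ℝ) ≤ s ∧ (a : ℝ) + b - s ≤ k := by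
    rcases le_total (a : ℝ) b with h | h
    · exact ⟨a, le_rfl, h, hla', by linarith⟩
    · exact ⟨b, h, le_rfl, hlb', by linarith⟩
  set t : ℝ := (s - ∑ i, (l i : ℝ)) / (n + 1) with ht
  have ht0 : 0 ≤ t := div_nonneg (by linarith) (by positivity)
  have hsum : ∑ i : Fin (n + 1), ((l i : ℝ) + t) = s := by
    rw [Finset.sum_add_distrib]
    simp only [Finset.sum_const, Finset.card_univ, Fintype.card_fin, nsmul_eq_mul, ht]
    push_cast
    field_simp
    ring
  have hle : ∀ x : Fin (n + 1), (x : ℕ) ≤ n := fun x => by omega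
  refine ⟨fun j => if h : (j : ℕ) < n + 1 then (l ⟨j, h⟩ : ℝ) + t
    else if (j : ℕ) = n + 1 then a - s else b - s, ?_, ?_, ?_⟩
  · intro j
    dsimp only
    split_ifs
    · positivity
    · linarith
    · linarith
  · rw [Fin.sum_univ_castSucc, Fin.sum_univ_castSucc]
    simp [hle]
    rw [hsum]
    linarith
  · ext i
    rw [coords]
    obtain ⟨i, hi⟩ := i
    simp only [phi]
    split_ifs with h1 h2
    all_goals try omega
    · simp [Fin.last]
    · simp [hle, hsum]
    · simp [hle, hsum]

lemma mem_phi (n k : ℕ) (x : Fin (n + 2) → ℤ)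
    (hx : (fun i => (x i : ℝ)) ∈
      (k : ℝ) • convexHull ℝ (insert (0 : Fin (n + 2) → ℝ) (Set.range (Vpt n)))) :
    ∃ a b : ℕ, ∃ l : Fin (n + 1) → ℕ, a ≤ k ∧ b ≤ k ∧ ∑ i, l i ≤ a ∧ ∑ i, l i ≤ b ∧
      x = phi n ⟨(a, b), l⟩ := by
  rw [mem_dilate] at hx
  obtain ⟨w, hw, hwk, hx⟩ := hx
  have hc : ∀ i, (x i : ℝ) = _ := fun i => (congrFun hx i).trans (coords n w i)
  have hA := hc ⟨n, by omega⟩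
  have hB := hc ⟨n + 1, by omega⟩
  simp only [lt_irrefl, dite_false, if_true] at hA
  simp at hB
  rw [Fin.sum_univ_castSucc, Fin.sum_univ_castSucc] at hwk
  set s : ℝ := ∑ j : Fin (n + 1), w ⟨j, by omega⟩ with hs
  have hs0 : 0 ≤ s := Finset.sum_nonneg fun j _ => hw _
  have hwk' : s + w ⟨n + 1, by omega⟩ + w ⟨n + 2, by omega⟩ ≤ k := hwk
  have h1 := hw ⟨n + 1, by omega⟩
  have h2 := hw ⟨n + 2, by omega⟩
  have a0 : 0 ≤ x ⟨n, by omega⟩ := by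
    have : (0 : ℝ) ≤ x ⟨n, by omega⟩ := by linarith
    exact_mod_cast this
  have b0 : 0 ≤ x ⟨n + 1, by omega⟩ := by
    have : (0 : ℝ) ≤ x ⟨n + 1, by omega⟩ := by linarith
    exact_mod_cast this
  obtain ⟨a, ha⟩ := Int.eq_ofNat_of_zero_le a0
  obtain ⟨b, hb⟩ := Int.eq_ofNat_of_zero_le b0
  rw [ha] at hA
  rw [hb] at hB
  push_cast at hA hB
  have hl : ((∑ j : Fin (n + 1), ⌊w ⟨j, by omega⟩⌋₊ : ℕ) : ℝ) ≤ s := by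
    push_cast
    exact Finset.sum_le_sum fun j _ => Nat.floor_le (hw _)
  refine ⟨a, b, fun j => ⌊w ⟨j, by omega⟩⌋₊, ?_, ?_, ?_, ?_, ?_⟩
  · have : (a : ℝ) ≤ k := by linarith
    exact_mod_cast this
  · have : (b : ℝ) ≤ k := by linarith
    exact_mod_cast this
  · have := hl.trans (show s ≤ a by linarith)
    exact_mod_cast this
  · have := hl.trans (show s ≤ b by linarith)
    exact_mod_cast this
  · ext i
    have hi := hc i
    obtain ⟨i, hi'⟩ := i
    simp only [phi]
    split_ifs with c1 c2
    · simp only [c1, dite_true] at hi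
      rw [Int.natCast_floor_eq_floor (hw _), Int.natCast_floor_eq_floor (hw _)]
      have : w ⟨i, by omega⟩ = w ⟨n, by omega⟩ + (x ⟨i, hi'⟩ : ℝ) := by linarith
      rw [this, Int.floor_add_intCast]
      simp [Fin.last]
    · subst c2
      exact ha
    · have : i = n + 1 := by omega
      subst this
      exact hb

/-- Subtract the minimum. -/
lemma reduce (n : ℕ) (l : Fin (n + 1) → ℕ) :
    ∃ l' : Fin (n + 1) → ℕ, (∃ i, l' i = 0) ∧ (∑ i, l' i ≤ ∑ i, l i) ∧
      ∀ i j, (l i : ℤ) - l j = (l' i : ℤ) - l' j := by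
  obtain ⟨i₀, hi₀⟩ := Finite.exists_min l
  refine ⟨fun i => l i - l i₀, ⟨i₀, by simp⟩, Finset.sum_le_sum fun i _ => Nat.sub_le _ _, ?_⟩
  intro i j
  have := hi₀ i
  have := hi₀ j
  dsimp only
  omega

lemma phi_inj (n : ℕ) (p q : Σ _ : ℕ × ℕ, (Fin (n + 1) → ℕ)) (hp : ∃ i, p.2 i = 0)
    (hq : ∃ i, q.2 i = 0) (h : phi n p = phi n q) : p = q := by
  obtain ⟨⟨a, b⟩, l⟩ := p
  obtain ⟨⟨c, d⟩, m⟩ := q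
  obtain ⟨i, hi⟩ := hp
  obtain ⟨j, hj⟩ := hq
  have h1 := congrFun h ⟨n, by omega⟩
  have h2 := congrFun h ⟨n + 1, by omega⟩
  simp [phi] at h1 h2
  have h3 : ∀ i : Fin (n + 1), (l i : ℤ) - l (Fin.last n) = (m i : ℤ) - m (Fin.last n) := by
    intro i
    refine Fin.lastCases ?_ (fun i' => ?_) i
    · simp
    · have := congrFun h ⟨i', by omega⟩
      simp only [phi, i'.2, dite_true] at this
      exact this
  have : l = m := by
    ext t
    have e1 := h3 i
    have e2 := h3 j
    have e3 := h3 t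
    simp only at hi hj
    omega
  subst h1 h2 this
  rfl

theorem stmt17 (n : ℕ) (hn : 1 ≤ n) (k : ℕ) :
    Set.ncard {x : Fin (n + 2) → ℤ |
        (fun i => (x i : ℝ)) ∈
          (k : ℝ) • convexHull ℝ (insert (0 : Fin (n + 2) → ℝ) (Set.range (Vpt n)))}
      = (k + n + 2).choose (n + 2)
        + 2 * (∑ j ∈ Finset.Icc 1 n, if j ≤ k then (k - j + n + 2).choose (n + 2) else 0)
        + (k + 1).choose (n + 2) := by
  rw [← sumS_final]
  let F : Finset (Σ _ : ℕ × ℕ, (Fin (n + 1) → ℕ)) :=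
    (Finset.range (k + 1) ×ˢ Finset.range (k + 1)).sigma fun ab => Qset n (min ab.1 ab.2)
  have hF : ∀ p, p ∈ F ↔ (p.1.1 ≤ k ∧ p.1.2 ≤ k) ∧
      ((∑ i, p.2 i ≤ p.1.1 ∧ ∑ i, p.2 i ≤ p.1.2) ∧ ∃ i, p.2 i = 0) := by
    intro p
    simp only [F, Finset.mem_sigma, Finset.mem_product, Finset.mem_range, mem_Qset, le_min_iff,
      Nat.lt_succ_iff]
  have hset : {x : Fin (n + 2) → ℤ |
        (fun i => (x i : ℝ)) ∈
          (k : ℝ) • convexHull ℝ (insert (0 : Fin (n + 2) → ℝ) (Set.range (Vpt n)))}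
      = Set.image (phi n) (F : Set (Σ _ : ℕ × ℕ, (Fin (n + 1) → ℕ))) := by
    ext x
    constructor
    · intro hx
      obtain ⟨a, b, l, ha, hb, hla, hlb, rfl⟩ := mem_phi n k x hx
      obtain ⟨l', h0, hle, hd⟩ := reduce n l
      refine ⟨⟨(a, b), l'⟩, ?_, ?_⟩
      · rw [Finset.mem_coe, hF]
        exact ⟨⟨ha, hb⟩, ⟨hle.trans hla, hle.trans hlb⟩, h0⟩
      · ext i
        simp only [phi]
        split_ifs
        · exact (hd _ _).symm
        · rfl
        · rfl
    · rintro ⟨⟨⟨a, b⟩, l⟩, hp, rfl⟩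
      rw [Finset.mem_coe, hF] at hp
      exact phi_mem n k a b hp.1.1 hp.1.2 l hp.2.1.1 hp.2.1.2
  rw [hset, Set.ncard_image_of_injOn, Set.ncard_coe_finset, Finset.card_sigma,
    Finset.sum_product]
  intro p hp q hq h
  rw [Finset.mem_coe, hF] at hp hq
  exact phi_inj n p q hp.2.2 hq.2.2 h
end
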